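/- Let μ be a singular Borel probability measure on [0,1), let α_n be the composition-sum coefficients determined by μ̂, and suppose F : ℝ → ℂ has the form F(y) = ∫₀¹ f(x) e^{−2πiyx} dμ(x) for some f ∈ L²(μ). Then F(y) = Σ_{n=0}^∞ (Σ_{j=0}^{n} α_{n−j} F(j)) μ̂(y − n) for all y ∈ ℝ, where the partial sums of the series converge uniformly in y on ℝ. -/

import Mathlib

open MeasureTheory Filter

/-!
Multiplication by `exp (2πix)` is a unitary `U` of `L²(μ)` that moves the exponential `e_y` to
`e_{y+1}`, and `F y = ⟪e_y, f⟫`. As `∑ μ̂(n) zⁿ` and `∑ α_n zⁿ` are inverse power series, the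
partial sums `∑ (∑ α_{n-j} F j) e_n` are the Kaczmarz approximations of `f` by `e_0, e_1, …`. If
they tend to `f` in `L²(μ)`, then pairing with the unit vectors `e_y` gives convergence uniformly
in `y`.

The vectors with convergent approximations form a closed subspace, and by stationarity it contains
every `e_n`, `n ∈ ℤ`, as soon as it contains `e_{-1}`. The squared residual of `e_{-1}` after `N`
steps is `2 - ∑_{n ≤ N} |α_n|²`, so it remains to see that `∑ |α_n|² ≥ 2`. On the circle of radius
`r < 1` let `M` and `A = 1/M` be the two power series, so that `P = 2 Re M - 1 ≥ 0` is the Poisson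
integral of `μ`. Then `2 Re A - |A|² = |A|² P ≤ 4 P`, and also `2 Re A - |A|² ≤ 1`. The mean of the
left-hand side is at least `2 - ∑ |α_n|²`, whereas by singularity of `μ` the two bounds combine to
make it arbitrarily small as `r → 1`: use the first one where a cutoff `φ` is near `0` and the
second one where `φ` is near `1`, with `φ` near `1` for `μ` and near `0` for Lebesgue measure.
-/

section CompositionSum

/-- The composition of `n + 1` obtained from a composition of `n - k` by prepending the block
`k + 1`. -/
def prependBlock {n : ℕ} (k : Fin (n + 1)) (p : Composition (n - k)) : Composition (n + 1) where
  blocks := (k + 1) :: p.blocks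
  blocks_pos := by
    rintro i (_ | ⟨_, hi⟩)
    exacts [Nat.succ_pos k, p.blocks_pos hi]
  blocks_sum := by
    rw [List.sum_cons, p.blocks_sum]
    omega

lemma prependBlock_bijective (n : ℕ) :
    Function.Bijective fun x : Σ k : Fin (n + 1), Composition (n - k) => prependBlock x.1 x.2 := by
  constructor
  · rintro ⟨k, p⟩ ⟨l, q⟩ h
    obtain ⟨hkl, hpq⟩ := List.cons.inj (congrArg Composition.blocks h)
    obtain rfl : k = l := Fin.ext (Nat.succ_injective hkl)
    obtain rfl : p = q := Composition.ext hpq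
    rfl
  · rintro ⟨_ | ⟨b, l⟩, hpos, hsum⟩
    · simp at hsum
    · have hb : 0 < b := hpos List.mem_cons_self
      rw [List.sum_cons] at hsum
      refine ⟨⟨⟨b - 1, by omega⟩, ⟨l, fun hi => hpos (List.mem_cons_of_mem b hi), ?_⟩⟩, ?_⟩
      · simp only
        omega
      · exact Composition.ext (congrArg (· :: l) (Nat.sub_add_cancel hb))

/-- The sum over all compositions of `n` of the product of the values of `b` at the blocks. -/
def compositionSum {R : Type*} [Semiring R] (b : ℕ → R) (n : ℕ) : R :=
  ∑ p : Composition n, (p.blocks.map b).prod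

lemma compositionSum_zero {R : Type*} [Semiring R] (b : ℕ → R) : compositionSum b 0 = 1 := by
  have : Subsingleton (Composition 0) :=
    Fintype.card_le_one_iff_subsingleton.1 (composition_card 0).le
  rw [compositionSum, Fintype.sum_subsingleton _ (Composition.ones 0), Composition.ones_blocks,
    List.replicate_zero, List.map_nil, List.prod_nil]

lemma compositionSum_succ {R : Type*} [Semiring R] (b : ℕ → R) (n : ℕ) :
    compositionSum b (n + 1) =
      ∑ k ∈ Finset.range (n + 1), b (k + 1) * compositionSum b (n - k) := by
  simp only [compositionSum, Finset.sum_range, Finset.mul_sum, ← Fintype.sum_sigma']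
  refine (Fintype.sum_bijective _ (prependBlock_bijective n) _ _ fun x => ?_).symm
  rw [prependBlock, List.map_cons, List.prod_cons]

lemma compositionSum_neg {R : Type*} [Ring R] (a : ℕ → R) (n : ℕ) :
    compositionSum (-a) n = ∑ p : Composition n, (-1) ^ p.length * (p.blocks.map a).prod := by
  refine Finset.sum_congr rfl fun p _ => ?_
  rw [← Composition.blocks_length, ← List.length_map (f := a), ← List.prod_map_neg, List.map_map]
  rfl

lemma mk_mul_mk_compositionSum_neg {R : Type*} [Ring R] (a : ℕ → R) (ha : a 0 = 1) :
    PowerSeries.mk a * PowerSeries.mk (compositionSum (-a)) = 1 := by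
  ext (_ | n)
  · simp [ha, compositionSum_zero]
  · rw [PowerSeries.coeff_mul, Finset.Nat.sum_antidiagonal_eq_sum_range_succ_mk,
      Finset.sum_range_succ', PowerSeries.coeff_one, if_neg n.succ_ne_zero]
    simp only [PowerSeries.coeff_mk, ha, one_mul, Nat.sub_zero, compositionSum_succ, Pi.neg_apply,
      neg_mul, Finset.sum_neg_distrib, Nat.add_sub_add_right, add_neg_cancel]

end CompositionSum

section Kaczmarz

open Finset
open scoped InnerProductSpace Topology

variable {𝕜 H : Type*} [RCLike 𝕜] [NormedAddCommGroup H] [InnerProductSpace 𝕜 H]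

/-- One step of the Kaczmarz algorithm for the stationary sequence `e, U e, U² e, …`, in a moving
frame: the residual of `f` after projecting onto the complement of `e`, pulled back by `U` so that
the next vector to be used is `e` again. -/
noncomputable def kaczmarzStep (U : H ≃ₗᵢ[𝕜] H) (e : H) : H →L[𝕜] H :=
  (U.symm : H →L[𝕜] H) ∘L (.id 𝕜 H - (innerSL 𝕜 e).smulRight e)

variable {U : H ≃ₗᵢ[𝕜] H} {e : H} {α : ℕ → 𝕜}

lemma kaczmarzStep_apply (U : H ≃ₗᵢ[𝕜] H) (e f : H) :
    kaczmarzStep U e f = U.symm (f - ⟪e, f⟫_𝕜 • e) := rfl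

lemma norm_sub_inner_smul_sq (he : ‖e‖ = 1) (f : H) :
    ‖f - ⟪e, f⟫_𝕜 • e‖ ^ 2 = ‖f‖ ^ 2 - ‖⟪e, f⟫_𝕜‖ ^ 2 := by
  have horth : ⟪f - ⟪e, f⟫_𝕜 • e, ⟪e, f⟫_𝕜 • e⟫_𝕜 = 0 := by
    simp [inner_smul_right, inner_sub_left, inner_smul_left, inner_self_eq_norm_sq_to_K, he]
  have hpyth := norm_add_sq_eq_norm_sq_add_norm_sq_of_inner_eq_zero _ _ horth
  rw [sub_add_cancel, norm_smul, he] at hpyth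
  linarith

lemma norm_kaczmarzStep_pow_sq (he : ‖e‖ = 1) (f : H) (N : ℕ) :
    ‖(kaczmarzStep U e ^ N) f‖ ^ 2 =
      ‖f‖ ^ 2 - ∑ n ∈ range N, ‖⟪e, (kaczmarzStep U e ^ n) f⟫_𝕜‖ ^ 2 := by
  induction N with
  | zero => simp
  | succ N ih =>
    rw [pow_succ' (kaczmarzStep U e), mul_apply_eq_comp, kaczmarzStep_apply,
      LinearIsometryEquiv.norm_map, norm_sub_inner_smul_sq he, ih, sum_range_succ, sub_sub]

lemma norm_kaczmarzStep_pow_le (he : ‖e‖ = 1) (f : H) (N : ℕ) :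
    ‖(kaczmarzStep U e ^ N) f‖ ≤ ‖f‖ := by
  rw [← sq_le_sq₀ (norm_nonneg _) (norm_nonneg _), norm_kaczmarzStep_pow_sq he]
  exact sub_le_self _ (sum_nonneg fun _ _ => sq_nonneg _)

lemma sum_inner_smul_pow_add_pow_kaczmarzStep (U : H ≃ₗᵢ[𝕜] H) (e f : H) (N : ℕ) :
    ∑ n ∈ range N, ⟪e, (kaczmarzStep U e ^ n) f⟫_𝕜 • (U ^ n) e +
      (U ^ N) ((kaczmarzStep U e ^ N) f) = f := by
  induction N with
  | zero => simp [LinearIsometryEquiv.one_def]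
  | succ N ih =>
    rw [sum_range_succ, pow_succ U, pow_succ' (kaczmarzStep U e), LinearIsometryEquiv.coe_mul,
      Function.comp_apply, mul_apply_eq_comp, kaczmarzStep_apply,
      LinearIsometryEquiv.apply_symm_apply, map_sub, map_smul, add_assoc, add_sub_cancel, ih]

lemma inner_pow_apply_pow_apply {k n : ℕ} (hkn : k ≤ n) (x y : H) :
    ⟪(U ^ n) x, (U ^ k) y⟫_𝕜 = ⟪(U ^ (n - k)) x, y⟫_𝕜 := by
  conv_lhs => rw [← Nat.add_sub_cancel' hkn, pow_add, LinearIsometryEquiv.coe_mul]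
  exact LinearIsometryEquiv.inner_map_map _ _ _

lemma mk_inner_pow_apply (he : ‖e‖ = 1) (f : H) :
    PowerSeries.mk (fun n => ⟪(U ^ n) e, f⟫_𝕜) =
      PowerSeries.mk (fun n => ⟪e, (kaczmarzStep U e ^ n) f⟫_𝕜) *
        PowerSeries.mk (fun n => ⟪(U ^ n) e, e⟫_𝕜) := by
  ext n
  rw [PowerSeries.coeff_mul, Nat.sum_antidiagonal_eq_sum_range_succ_mk, sum_range_succ]
  simp only [PowerSeries.coeff_mk, Nat.sub_self, pow_zero, LinearIsometryEquiv.coe_one, id_eq,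
    inner_self_eq_norm_sq_to_K, he, RCLike.ofReal_one, one_pow, mul_one]
  conv_lhs => rw [← sum_inner_smul_pow_add_pow_kaczmarzStep U e f n]
  rw [inner_add_right, inner_sum, LinearIsometryEquiv.inner_map_map]
  congr 1
  refine sum_congr rfl fun k hk => ?_
  rw [inner_smul_right, inner_pow_apply_pow_apply (mem_range.1 hk).le]

lemma inner_kaczmarzStep_pow (he : ‖e‖ = 1)
    (hα : PowerSeries.mk (fun n => ⟪(U ^ n) e, e⟫_𝕜) * PowerSeries.mk α = 1) (f : H) (n : ℕ) :
    ⟪e, (kaczmarzStep U e ^ n) f⟫_𝕜 = ∑ j ∈ range (n + 1), α (n - j) * ⟪(U ^ j) e, f⟫_𝕜 := by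
  have h := congrArg (PowerSeries.coeff n) (congrArg (· * PowerSeries.mk α)
    (mk_inner_pow_apply (U := U) he f))
  simp only [mul_assoc, hα, mul_one, PowerSeries.coeff_mk, PowerSeries.coeff_mul,
    Nat.sum_antidiagonal_eq_sum_range_succ_mk] at h
  simpa only [mul_comm] using h.symm

lemma inner_kaczmarzStep_pow_symm_apply (he : ‖e‖ = 1)
    (hα : PowerSeries.mk (fun n => ⟪(U ^ n) e, e⟫_𝕜) * PowerSeries.mk α = 1) (n : ℕ) :
    ⟪e, (kaczmarzStep U e ^ n) (U.symm e)⟫_𝕜 = -α (n + 1) := by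
  have h := congrArg (PowerSeries.coeff (n + 1)) hα
  rw [PowerSeries.coeff_mul, Nat.sum_antidiagonal_eq_sum_range_succ_mk, sum_range_succ',
    PowerSeries.coeff_one, if_neg n.succ_ne_zero] at h
  simp only [PowerSeries.coeff_mk, Nat.sub_zero, pow_zero, LinearIsometryEquiv.coe_one, id_eq,
    inner_self_eq_norm_sq_to_K, he, RCLike.ofReal_one, one_pow, one_mul,
    Nat.add_sub_add_right] at h
  rw [inner_kaczmarzStep_pow he hα, ← add_eq_zero_iff_eq_neg, ← h]
  congr 1
  refine sum_congr rfl fun j _ => ?_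
  rw [mul_comm, pow_succ', LinearIsometryEquiv.coe_mul, Function.comp_apply,
    ← LinearIsometryEquiv.inner_map_map U, LinearIsometryEquiv.apply_symm_apply]

lemma sum_norm_sq_eq_two_sub (he : ‖e‖ = 1)
    (hα : PowerSeries.mk (fun n => ⟪(U ^ n) e, e⟫_𝕜) * PowerSeries.mk α = 1) (N : ℕ) :
    ∑ n ∈ range (N + 1), ‖α n‖ ^ 2 = 2 - ‖(kaczmarzStep U e ^ N) (U.symm e)‖ ^ 2 := by
  have hα0 : α 0 = 1 := by
    simpa [inner_self_eq_norm_sq_to_K, he] using congrArg (PowerSeries.coeff 0) hα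
  rw [norm_kaczmarzStep_pow_sq he, LinearIsometryEquiv.norm_map, he, sum_range_succ', hα0]
  simp only [inner_kaczmarzStep_pow_symm_apply he hα, norm_neg, norm_one, one_pow]
  ring

lemma summable_norm_sq_of_mk_inner_mul_eq_one (he : ‖e‖ = 1)
    (hα : PowerSeries.mk (fun n => ⟪(U ^ n) e, e⟫_𝕜) * PowerSeries.mk α = 1) :
    Summable fun n => ‖α n‖ ^ 2 := by
  refine summable_of_sum_range_le (c := 2) (fun _ => sq_nonneg _) fun N => ?_
  calc ∑ n ∈ range N, ‖α n‖ ^ 2 ≤ ∑ n ∈ range (N + 1), ‖α n‖ ^ 2 :=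
        sum_le_sum_of_subset_of_nonneg (range_mono N.le_succ) fun _ _ _ => sq_nonneg _
    _ ≤ 2 := by
        rw [sum_norm_sq_eq_two_sub he hα]
        exact sub_le_self _ (sq_nonneg _)

lemma tendsto_kaczmarzStep_pow_symm_apply (he : ‖e‖ = 1)
    (hα : PowerSeries.mk (fun n => ⟪(U ^ n) e, e⟫_𝕜) * PowerSeries.mk α = 1)
    (hα2 : 2 ≤ ∑' n, ‖α n‖ ^ 2) :
    Tendsto (fun N => (kaczmarzStep U e ^ N) (U.symm e)) atTop (𝓝 0) := by
  have hsum := summable_norm_sq_of_mk_inner_mul_eq_one he hα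
  have hlim := (tendsto_add_atTop_iff_nat 1).2 hsum.hasSum.tendsto_sum_nat
  simp only [sum_norm_sq_eq_two_sub he hα] at hlim
  have htsum : ∑' n, ‖α n‖ ^ 2 = 2 :=
    (le_of_tendsto' hlim fun N => sub_le_self _ (sq_nonneg _)).antisymm hα2
  have hsq : Tendsto (fun N => ‖(kaczmarzStep U e ^ N) (U.symm e)‖ ^ 2) atTop (𝓝 0) := by
    simpa [htsum] using hlim.const_sub 2
  exact tendsto_zero_iff_norm_tendsto_zero.2 (by simpa using hsq.sqrt)

/-- The vectors on which the Kaczmarz algorithm is effective: those whose residuals tend to `0`. -/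
def kaczmarzEffective (U : H ≃ₗᵢ[𝕜] H) (e : H) : Submodule 𝕜 H where
  carrier := {f | Tendsto (fun N => (kaczmarzStep U e ^ N) f) atTop (𝓝 0)}
  add_mem' hf hg := by simpa only [Set.mem_ofPred_eq, map_add, add_zero] using hf.add hg
  zero_mem' := by simp
  smul_mem' c f hf := by
    simpa only [Set.mem_ofPred_eq, map_smul, smul_zero] using hf.const_smul c

lemma kaczmarzStep_mem_kaczmarzEffective_iff {f : H} :
    kaczmarzStep U e f ∈ kaczmarzEffective U e ↔ f ∈ kaczmarzEffective U e := by
  change Tendsto _ _ _ ↔ Tendsto _ _ _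
  rw [← tendsto_add_atTop_iff_nat (f := fun N => (kaczmarzStep U e ^ N) f) 1]
  simp only [pow_succ, mul_apply_eq_comp]

lemma isClosed_kaczmarzEffective (he : ‖e‖ = 1) :
    IsClosed (kaczmarzEffective U e : Set H) := by
  have hequi : Equicontinuous fun (N : ℕ) (f : H) => (kaczmarzStep U e ^ N) f := by
    refine (LipschitzWith.uniformEquicontinuous _ 1 fun N => ?_).equicontinuous
    refine LipschitzWith.of_dist_le_mul fun f g => ?_
    rw [dist_eq_norm, ← map_sub, NNReal.coe_one, one_mul, dist_eq_norm]
    exact norm_kaczmarzStep_pow_le he _ N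
  exact hequi.isClosed_setOfPred_tendsto continuous_const

lemma symm_zpow_apply (n : ℤ) : U.symm ((U ^ n) e) = (U ^ (n - 1)) e := by
  rw [sub_eq_neg_add, zpow_add, zpow_neg_one]; rfl

lemma zpow_apply_mem_kaczmarzEffective (h : U.symm e ∈ kaczmarzEffective U e) (n : ℤ) :
    (U ^ n) e ∈ kaczmarzEffective U e := by
  have hstep (k : ℤ) :
      (U ^ (k - 1)) e ∈ kaczmarzEffective U e ↔ (U ^ k) e ∈ kaczmarzEffective U e := by
    rw [← kaczmarzStep_mem_kaczmarzEffective_iff (f := (U ^ k) e), kaczmarzStep_apply, map_sub,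
      map_smul, symm_zpow_apply,
      Submodule.sub_mem_iff_left _ (Submodule.smul_mem _ _ h)]
  induction n using Int.induction_on with
  | zero => exact (hstep 0).1 (by rwa [← symm_zpow_apply])
  | succ n ih => exact (hstep _).1 (by rwa [add_sub_cancel_right])
  | pred n ih => exact (hstep _).2 ih

theorem tendsto_kaczmarz_sum (he : ‖e‖ = 1)
    (hdense : Dense (Submodule.span 𝕜 (Set.range fun n : ℤ => (U ^ n) e) : Set H))
    (hα : PowerSeries.mk (fun n => ⟪(U ^ n) e, e⟫_𝕜) * PowerSeries.mk α = 1)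
    (hα2 : 2 ≤ ∑' n, ‖α n‖ ^ 2) (f : H) :
    Tendsto (fun N => ∑ n ∈ range N,
      (∑ j ∈ range (n + 1), α (n - j) * ⟪(U ^ j) e, f⟫_𝕜) • (U ^ n) e) atTop (𝓝 f) := by
  have hspan : Submodule.span 𝕜 (Set.range fun n : ℤ => (U ^ n) e) ≤ kaczmarzEffective U e :=
    Submodule.span_le.2 <| Set.range_subset_iff.2 <|
      zpow_apply_mem_kaczmarzEffective (tendsto_kaczmarzStep_pow_symm_apply he hα hα2)
  have hf : Tendsto (fun N => (kaczmarzStep U e ^ N) f) atTop (𝓝 0) :=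
    closure_minimal hspan (isClosed_kaczmarzEffective he) (hdense f)
  rw [tendsto_iff_norm_sub_tendsto_zero]
  convert hf.norm using 2 with N
  · simp only [← inner_kaczmarzStep_pow he hα]
    nth_rw 2 [← sum_inner_smul_pow_add_pow_kaczmarzStep U e f N]
    rw [sub_add_cancel_left, norm_neg, LinearIsometryEquiv.norm_map]
  · rw [norm_zero]

lemma tendstoUniformly_inner {ι X : Type*} {l : Filter ι} {s : ι → H} {f : H}
    (hs : Tendsto s l (𝓝 f)) {k : X → H} {C : ℝ} (hk : ∀ y, ‖k y‖ ≤ C) :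
    TendstoUniformly (fun i y => ⟪k y, s i⟫_𝕜) (fun y => ⟪k y, f⟫_𝕜) l := by
  have hbound (i : ι) (y : X) : dist ⟪k y, f⟫_𝕜 ⟪k y, s i⟫_𝕜 ≤ C * ‖f - s i‖ := by
    rw [dist_eq_norm, ← inner_sub_right]
    exact (norm_inner_le_norm _ _).trans (mul_le_mul_of_nonneg_right (hk y) (norm_nonneg _))
  have hlim : Tendsto (fun i => C * ‖f - s i‖) l (𝓝 0) := by
    simpa using (hs.const_sub f).norm.const_mul C
  rw [Metric.tendstoUniformly_iff]
  intro ε hε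
  filter_upwards [hlim.eventually_lt_const hε] with i hi y
  exact (hbound i y).trans_lt hi

end Kaczmarz

section AnalyticFourierSum

open AddCircle Finset
open scoped Topology ComplexConjugate

/-- The continuous function `∑ n ≥ 0, c n e_n` on the circle, where `e_n` are the Fourier
monomials. Only meaningful for summable `c`. -/
noncomputable def analyticFourierSum (T : ℝ) (c : ℕ → ℂ) : C(AddCircle T, ℂ) :=
  ∑' n : ℕ, c n • fourier (n : ℤ)

variable {T : ℝ} [hT : Fact (0 < T)] {c d : ℕ → ℂ}

lemma summable_norm_smul_fourier (hc : Summable c) :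
    Summable fun n : ℕ => ‖c n • fourier (T := T) n‖ := by
  simpa only [norm_smul, fourier_norm, mul_one] using hc.norm

lemma summable_smul_fourier (hc : Summable c) :
    Summable fun n : ℕ => c n • fourier (T := T) n :=
  (summable_norm_smul_fourier (T := T) hc).of_norm

lemma hasSum_analyticFourierSum (hc : Summable c) :
    HasSum (fun n : ℕ => c n • fourier (n : ℤ)) (analyticFourierSum T c) :=
  (summable_smul_fourier hc).hasSum

lemma hasSum_fourierCoeff {ι : Type*} {g : ι → C(AddCircle T, ℂ)} {f : C(AddCircle T, ℂ)}
    (h : HasSum g f) (n : ℤ) : HasSum (fun i => fourierCoeff (g i) n) (fourierCoeff f n) := by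
  have hinner (f : C(AddCircle T, ℂ)) :
      inner ℂ (fourierLp 2 n) (ContinuousMap.toLp 2 haarAddCircle ℂ f) = fourierCoeff f n := by
    rw [← fourierCoeff_toLp, ← fourierBasis_repr, HilbertBasis.repr_apply_apply, coe_fourierBasis]
  simpa only [ContinuousLinearMap.comp_apply, innerSL_apply_apply, hinner] using
    h.mapL (innerSL ℂ (fourierLp 2 n) ∘L ContinuousMap.toLp 2 haarAddCircle ℂ)

lemma hasSum_fourierCoeff_analyticFourierSum (hc : Summable c) (k : ℤ) :
    HasSum (fun n : ℕ => if (n : ℤ) = k then c n else 0)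
      (fourierCoeff (analyticFourierSum T c) k) := by
  convert hasSum_fourierCoeff (hasSum_analyticFourierSum (T := T) hc) k using 2 with n
  rw [ContinuousMap.coe_smul, fourierCoeff.const_smul, fourierCoeff_fourier, Pi.single_apply,
    smul_eq_mul, mul_ite, mul_one, mul_zero]
  simp only [eq_comm]

lemma fourierCoeff_analyticFourierSum_natCast (hc : Summable c) (n : ℕ) :
    fourierCoeff (analyticFourierSum T c) n = c n := by
  refine (hasSum_fourierCoeff_analyticFourierSum hc n).unique ?_
  simpa using hasSum_single (f := fun k : ℕ => if (k : ℤ) = n then c k else 0) n fun k hk =>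
    if_neg (Nat.cast_injective.ne hk)

lemma fourierCoeff_analyticFourierSum_of_neg (hc : Summable c) {k : ℤ} (hk : k < 0) :
    fourierCoeff (analyticFourierSum T c) k = 0 := by
  refine (hasSum_fourierCoeff_analyticFourierSum hc k).unique ?_
  convert hasSum_zero with n
  exact if_neg (by omega)

lemma integral_norm_sq_analyticFourierSum (hc : Summable c) :
    ∫ w, ‖analyticFourierSum T c w‖ ^ 2 ∂haarAddCircle = ∑' n, ‖c n‖ ^ 2 := by
  calc ∫ w, ‖analyticFourierSum T c w‖ ^ 2 ∂haarAddCircle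
      = ∫ w, ‖ContinuousMap.toLp 2 haarAddCircle ℂ (analyticFourierSum T c) w‖ ^ 2
          ∂haarAddCircle := by
        refine integral_congr_ae ?_
        filter_upwards [ContinuousMap.coeFn_toLp (p := 2) (𝕜 := ℂ) haarAddCircle
          (analyticFourierSum T c)] with w hw
        rw [hw]
    _ = ∑' k : ℤ, ‖fourierCoeff (analyticFourierSum T c) k‖ ^ 2 := by
        simp only [← tsum_sq_fourierCoeff, fourierCoeff_toLp]
    _ = ∑' n : ℕ, ‖fourierCoeff (analyticFourierSum T c) n‖ ^ 2 := by
        refine (Nat.cast_injective.tsum_eq fun k hk => ?_).symm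
        obtain ⟨n, rfl⟩ : ∃ n : ℕ, (n : ℤ) = k := by
          refine Int.eq_ofNat_of_zero_le (not_lt.1 fun hneg => hk ?_) |>.imp fun _ => Eq.symm
          simp only [fourierCoeff_analyticFourierSum_of_neg hc hneg, norm_zero]
          exact zero_pow two_ne_zero
        exact ⟨n, rfl⟩
    _ = ∑' n, ‖c n‖ ^ 2 := by simp only [fourierCoeff_analyticFourierSum_natCast hc]

lemma analyticFourierSum_mul (hc : Summable c) (hd : Summable d) :
    analyticFourierSum T c * analyticFourierSum T d =
      analyticFourierSum T fun n => PowerSeries.coeff n (PowerSeries.mk c * PowerSeries.mk d) := by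
  refine (tsum_mul_tsum_eq_tsum_sum_antidiagonal_of_summable_norm
    (summable_norm_smul_fourier (T := T) hc) (summable_norm_smul_fourier (T := T) hd)).trans
    (tsum_congr fun n => ?_)
  simp only [PowerSeries.coeff_mul, sum_smul]
  refine sum_congr rfl fun kl hkl => ?_
  ext w
  simp only [← mem_antidiagonal.1 hkl, PowerSeries.coeff_mk, ContinuousMap.mul_apply,
    ContinuousMap.smul_apply, smul_eq_mul, Nat.cast_add, fourier_add]
  ring

lemma analyticFourierSum_mul_eq_one (hc : Summable c) (hd : Summable d)
    (h : PowerSeries.mk c * PowerSeries.mk d = 1) :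
    analyticFourierSum T c * analyticFourierSum T d = 1 := by
  rw [analyticFourierSum_mul hc hd, h, analyticFourierSum, tsum_eq_single 0]
  · ext w
    simp
  · intro n hn
    rw [PowerSeries.coeff_one, if_neg hn, zero_smul]

end AnalyticFourierSum

section WeakConvergence

open AddCircle
open scoped Topology

lemma integrable_continuousMap {X E : Type*} [TopologicalSpace X] [CompactSpace X]
    [MeasurableSpace X] [OpensMeasurableSpace X] [NormedAddCommGroup E] (ν : Measure X)
    [IsFiniteMeasureOnCompacts ν] (g : C(X, E)) : Integrable g ν :=
  g.continuous.integrable_of_hasCompactSupport (.of_compactSpace g)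

lemma lipschitzWith_integral {X E : Type*} [TopologicalSpace X] [CompactSpace X]
    [MeasurableSpace X] [OpensMeasurableSpace X] [NormedAddCommGroup E] [NormedSpace ℝ E]
    (ν : Measure X) [IsProbabilityMeasure ν] :
    LipschitzWith 1 fun g : C(X, E) => ∫ x, g x ∂ν := by
  refine LipschitzWith.of_dist_le_mul fun g h => ?_
  rw [dist_eq_norm, ← integral_sub (integrable_continuousMap ν g) (integrable_continuousMap ν h),
    NNReal.coe_one, one_mul, dist_eq_norm]
  simpa using norm_integral_le_of_norm_le_const (μ := ν) (C := ‖g - h‖)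
    (ae_of_all _ (g - h).norm_coe_le_norm)

lemma tendsto_integral_of_forall_fourier {T : ℝ} [Fact (0 < T)] {ι : Type*} {l : Filter ι}
    {ν : ι → Measure (AddCircle T)} [∀ i, IsProbabilityMeasure (ν i)]
    {m : Measure (AddCircle T)} [IsProbabilityMeasure m]
    (h : ∀ k : ℤ, Tendsto (fun i => ∫ z, fourier k z ∂ν i) l (𝓝 (∫ z, fourier k z ∂m)))
    (g : C(AddCircle T, ℂ)) :
    Tendsto (fun i => ∫ z, g z ∂ν i) l (𝓝 (∫ z, g z ∂m)) := by
  have hclosed : IsClosed {g : C(AddCircle T, ℂ) |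
      Tendsto (fun i => ∫ z, g z ∂ν i) l (𝓝 (∫ z, g z ∂m))} :=
    (LipschitzWith.uniformEquicontinuous _ 1 fun i => lipschitzWith_integral (ν i)).equicontinuous
      |>.isClosed_setOfPred_tendsto (lipschitzWith_integral m).continuous
  refine closure_minimal (fun g hg => ?_) hclosed
    (Submodule.dense_iff_topologicalClosure_eq_top.2 span_fourier_closure_eq_top g)
  induction hg using Submodule.span_induction with
  | mem _ hg =>
    obtain ⟨k, rfl⟩ := hg
    exact h k
  | zero => simpa using tendsto_const_nhds
  | add g₁ g₂ _ _ h₁ h₂ =>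
    simpa [integral_add, integrable_continuousMap] using h₁.add h₂
  | smul c g _ hg =>
    simpa [integral_const_mul] using hg.const_mul c

lemma exists_continuousMap_integral_le_of_mutuallySingular {X : Type*} [TopologicalSpace X]
    [CompactSpace X] [T2Space X] [MeasurableSpace X] [BorelSpace X]
    {m ν : Measure X} [IsFiniteMeasure m] [m.InnerRegularCompactLTTop] [ν.OuterRegular]
    (h : m ⟂ₘ ν) {ε : ℝ} (hε : 0 < ε) :
    ∃ φ : C(X, ℝ), (∀ x, φ x ∈ Set.Icc (0 : ℝ) 1) ∧ ∫ x, φ x ∂ν ≤ ε ∧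
      ∫ x, (1 - φ x) ∂m ≤ ε := by
  obtain ⟨s, hs, hms, hνs⟩ := h
  have hε' : ENNReal.ofReal ε ≠ 0 := (ENNReal.ofReal_pos.2 hε).ne'
  obtain ⟨K, hKs, hK, hmK⟩ := hs.compl.exists_isCompact_sdiff_lt (measure_ne_top m _) hε'
  obtain ⟨V, hsV, hV, hνV⟩ := sᶜ.exists_isOpen_lt_of_lt (μ := ν) (ENNReal.ofReal ε)
    (hνs.trans_lt (pos_iff_ne_zero.2 hε'))
  obtain ⟨φ, hφ0, hφ1, hφ⟩ := exists_continuous_zero_one_of_isClosed hV.isClosed_compl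
    hK.isClosed (Set.disjoint_compl_left_iff_subset.2 (hKs.trans hsV))
  refine ⟨φ, hφ, ?_, ?_⟩ <;> rw [← ENNReal.ofReal_le_ofReal_iff hε.le]
  · refine (integral_le_measure (fun x _ => (hφ x).2) fun x hx => ?_).trans hνV.le
    exact (hφ0 hx).le
  · have hmKc : m Kᶜ ≤ ENNReal.ofReal ε := by
      calc m Kᶜ ≤ m (s ∪ sᶜ \ K) := measure_mono fun x hx => by by_cases x ∈ s <;> simp_all
        _ ≤ m s + m (sᶜ \ K) := measure_union_le _ _
        _ ≤ ENNReal.ofReal ε := by rw [hms, zero_add]; exact hmK.le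
    refine (integral_le_measure (fun x _ => sub_le_self _ (hφ x).1) fun x hx => ?_).trans hmKc
    rw [hφ1 (not_not.1 hx), Pi.one_apply, sub_self]

end WeakConvergence

section PoissonMeasure

open AddCircle
open scoped Topology ComplexConjugate

variable {T : ℝ}

/-- The `n`-th Fourier–Stieltjes coefficient of a measure on the circle. -/
noncomputable def fourierStieltjes (m : Measure (AddCircle T)) (n : ℤ) : ℂ :=
  ∫ z, fourier (-n) z ∂m

lemma fourierStieltjes_zero (m : Measure (AddCircle T)) [IsProbabilityMeasure m] :
    fourierStieltjes m 0 = 1 := by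
  simp [fourierStieltjes]

lemma fourierStieltjes_neg (m : Measure (AddCircle T)) (k : ℤ) :
    fourierStieltjes m (-k) = conj (fourierStieltjes m k) := by
  simp only [fourierStieltjes, ← integral_conj, fourier_neg, Complex.conj_conj]

lemma norm_fourier_apply (n : ℤ) (z : AddCircle T) : ‖fourier n z‖ = 1 := by
  rw [fourier_apply, Circle.norm_coe]

lemma fourier_natCast_mul_apply (n : ℕ) (k : ℤ) (z : AddCircle T) :
    fourier (n * k) z = fourier k z ^ n := by
  induction n with
  | zero => simp
  | succ n ih => rw [Nat.cast_succ, add_one_mul, fourier_add, ih, pow_succ]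

lemma norm_fourierStieltjes_le (m : Measure (AddCircle T)) [IsProbabilityMeasure m] (n : ℤ) :
    ‖fourierStieltjes m n‖ ≤ 1 := by
  have h := norm_integral_le_of_norm_le_const (μ := m)
    (ae_of_all _ fun z => (norm_fourier_apply (-n) z).le)
  rwa [probReal_univ, mul_one] at h

/-- The function `w ↦ ∑ n ≥ 0, rⁿ a n e_n(w)`, i.e. the power series with coefficients `a` on the
circle of radius `r`. -/
noncomputable def abelSum (T : ℝ) (a : ℕ → ℂ) (r : ℝ) : C(AddCircle T, ℂ) :=
  analyticFourierSum T fun n => (r : ℂ) ^ n * a n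

/-- The Poisson integral of `m` at radius `r`. It is written as `2 Re M - 1` with `M` the analytic
half of its Fourier series, which is the Poisson integral of `m` when `m` has mass `1`. -/
noncomputable def poissonIntegral (m : Measure (AddCircle T)) (r : ℝ) : C(AddCircle T, ℝ) where
  toFun w := 2 * (abelSum T (fun n => fourierStieltjes m n) r w).re - 1

lemma ofReal_poissonIntegral (m : Measure (AddCircle T)) (r : ℝ) (w : AddCircle T) :
    (poissonIntegral m r w : ℂ) = abelSum T (fun n => fourierStieltjes m n) r w +
      conj (abelSum T (fun n => fourierStieltjes m n) r w) - fourier 0 w := by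
  rw [Complex.add_conj, poissonIntegral, ContinuousMap.coe_mk, fourier_zero]
  push_cast
  rfl

variable [hT : Fact (0 < T)] {m : Measure (AddCircle T)} {r : ℝ}

lemma summable_pow_mul_of_norm_le {a : ℕ → ℂ} {C : ℝ} (ha : ∀ n, ‖a n‖ ≤ C) {x : ℂ}
    (hx : ‖x‖ < 1) : Summable fun n => x ^ n * a n := by
  refine .of_norm_bounded ((summable_geometric_of_lt_one (norm_nonneg x) hx).mul_right C)
    fun n => ?_
  rw [norm_mul, norm_pow]
  exact mul_le_mul_of_nonneg_left (ha n) (by positivity)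

lemma hasSum_pow_mul_fourierStieltjes (m : Measure (AddCircle T)) [IsFiniteMeasure m] {x : ℂ}
    (hx : ‖x‖ < 1) :
    HasSum (fun n : ℕ => x ^ n * fourierStieltjes m n)
      (∫ z, (1 - x * fourier (-1) z)⁻¹ ∂m) := by
  have hnorm (n : ℕ) (z : AddCircle T) : ‖x ^ n * fourier (-(n : ℤ)) z‖ = ‖x‖ ^ n := by
    rw [norm_mul, norm_pow, norm_fourier_apply, mul_one]
  have hsum := hasSum_integral_of_summable_integral_norm (μ := m)
    (F := fun (n : ℕ) z => x ^ n * fourier (-(n : ℤ)) z)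
    (fun n => (integrable_continuousMap m _).const_mul _) (by
      simpa only [hnorm, integral_const, smul_eq_mul] using
        (summable_geometric_of_lt_one (norm_nonneg x) hx).mul_left _)
  have hgeom (z : AddCircle T) :
      ∑' n : ℕ, x ^ n * fourier (-(n : ℤ)) z = (1 - x * fourier (-1) z)⁻¹ := by
    simp only [← mul_neg_one (Nat.cast _ : ℤ), fourier_natCast_mul_apply, ← mul_pow]
    exact tsum_geometric_of_norm_lt_one (by rwa [norm_mul, norm_fourier_apply, mul_one])
  simpa only [integral_const_mul, hgeom, fourierStieltjes] using hsum

lemma one_half_le_re_inv_one_sub {u : ℂ} (hu : ‖u‖ < 1) : 1 / 2 ≤ ((1 - u)⁻¹).re := by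
  have hu2 : u.re * u.re + u.im * u.im < 1 := by
    rw [← Complex.normSq_apply, Complex.normSq_eq_norm_sq]
    exact pow_lt_one₀ (norm_nonneg u) hu two_ne_zero
  have hpos : 0 < Complex.normSq (1 - u) :=
    Complex.normSq_pos.2 (sub_ne_zero.2 fun h => by simp [← h] at hu)
  rw [Complex.inv_re, le_div_iff₀ hpos, Complex.normSq_apply]
  simp only [Complex.sub_re, Complex.one_re, Complex.sub_im, Complex.one_im]
  linarith

lemma norm_ofReal_lt_one (hr : |r| < 1) : ‖(r : ℂ)‖ < 1 := by rwa [Complex.norm_real]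

lemma hasSum_abelSum_apply {a : ℕ → ℂ} {C : ℝ} (ha : ∀ n, ‖a n‖ ≤ C) (hr : |r| < 1)
    (w : AddCircle T) : HasSum (fun n : ℕ => r ^ n * a n * fourier n w) (abelSum T a r w) :=
  ContinuousMap.hasSum_apply (hasSum_analyticFourierSum (T := T)
    (summable_pow_mul_of_norm_le ha (norm_ofReal_lt_one hr))) w

lemma one_half_le_re_abelSum_fourierStieltjes [IsProbabilityMeasure m] (hr : |r| < 1)
    (w : AddCircle T) : 1 / 2 ≤ (abelSum T (fun n => fourierStieltjes m n) r w).re := by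
  have hx (z : AddCircle T) : ‖(r : ℂ) * fourier 1 w * fourier (-1) z‖ < 1 := by
    rwa [norm_mul, norm_mul, norm_fourier_apply, norm_fourier_apply, mul_one, mul_one,
      Complex.norm_real]
  have hne (z : AddCircle T) : 1 - (r * fourier 1 w) * fourier (-1) z ≠ 0 :=
    sub_ne_zero.2 fun h => (hx z).ne (by rw [← h, norm_one])
  have hint : Integrable (fun z => (1 - (r * fourier 1 w) * fourier (-1) z)⁻¹) m :=
    integrable_continuousMap m ⟨_, Continuous.inv₀ (by fun_prop) hne⟩
  have hM : abelSum T (fun n => fourierStieltjes m n) r w =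
      ∫ z, (1 - (r * fourier 1 w) * fourier (-1) z)⁻¹ ∂m := by
    refine HasSum.unique ?_ (hasSum_pow_mul_fourierStieltjes m
      (by rwa [norm_mul, norm_fourier_apply, mul_one, Complex.norm_real]))
    convert hasSum_abelSum_apply (fun n => norm_fourierStieltjes_le m n) hr w using 2 with n
    rw [← mul_one (n : ℤ), fourier_natCast_mul_apply, mul_pow, mul_one, mul_right_comm]
  rw [hM, ← RCLike.re_eq_complex_re, ← integral_re hint]
  calc (1 / 2 : ℝ) = ∫ _, 1 / 2 ∂m := by simp
    _ ≤ _ := integral_mono (integrable_const _) hint.re fun z => one_half_le_re_inv_one_sub (hx z)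

lemma fourierCoeff_abelSum_natCast {a : ℕ → ℂ} {C : ℝ} (ha : ∀ n, ‖a n‖ ≤ C) (hr : |r| < 1)
    (n : ℕ) : fourierCoeff (abelSum T a r) n = r ^ n * a n :=
  fourierCoeff_analyticFourierSum_natCast
    (summable_pow_mul_of_norm_le ha (norm_ofReal_lt_one hr)) n

lemma fourierCoeff_abelSum_of_neg {a : ℕ → ℂ} {C : ℝ} (ha : ∀ n, ‖a n‖ ≤ C) (hr : |r| < 1)
    {k : ℤ} (hk : k < 0) : fourierCoeff (abelSum T a r) k = 0 :=
  fourierCoeff_analyticFourierSum_of_neg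
    (summable_pow_mul_of_norm_le ha (norm_ofReal_lt_one hr)) hk

lemma fourierCoeff_conj (f : AddCircle T → ℂ) (k : ℤ) :
    fourierCoeff (fun w => conj (f w)) k = conj (fourierCoeff f (-k)) := by
  simp only [fourierCoeff, ← integral_conj, smul_eq_mul, map_mul, neg_neg, fourier_neg]

lemma poissonIntegral_nonneg [IsProbabilityMeasure m] (hr : |r| < 1) (w : AddCircle T) :
    0 ≤ poissonIntegral m r w := by
  have h := one_half_le_re_abelSum_fourierStieltjes (m := m) hr w
  rw [poissonIntegral, ContinuousMap.coe_mk]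
  linarith

lemma fourierCoeff_poissonIntegral [IsProbabilityMeasure m] (hr : |r| < 1) (k : ℤ) :
    fourierCoeff (fun w => (poissonIntegral m r w : ℂ)) k =
      r ^ k.natAbs * fourierStieltjes m k := by
  set M := abelSum T (fun n => fourierStieltjes m n) r with hM
  have hpos (n : ℕ) : fourierCoeff M n = r ^ n * fourierStieltjes m n :=
    fourierCoeff_abelSum_natCast (fun n => norm_fourierStieltjes_le m n) hr n
  have hneg {j : ℤ} (hj : j < 0) : fourierCoeff M j = 0 :=
    fourierCoeff_abelSum_of_neg (fun n => norm_fourierStieltjes_le m n) hr hj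
  have hsplit : fourierCoeff (fun w => (poissonIntegral m r w : ℂ)) k =
      fourierCoeff M k + conj (fourierCoeff M (-k)) - (Pi.single 0 1 : ℤ → ℂ) k := by
    rw [← fourierCoeff_conj, ← fourierCoeff_fourier (T := T)]
    simp only [ofReal_poissonIntegral, ← hM, fourierCoeff, smul_eq_mul, mul_add, mul_sub]
    have hint {g : AddCircle T → ℂ} (hg : Continuous g) :
        Integrable (fun w => fourier (-k) w * g w) haarAddCircle :=
      integrable_continuousMap haarAddCircle ⟨_, (map_continuous (fourier (-k))).mul hg⟩
    have hM_int := hint M.continuous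
    have hconj_int := hint (Complex.continuous_conj.comp M.continuous)
    exact (integral_sub (hM_int.add hconj_int) (hint (map_continuous (fourier 0)))).trans
      (congrArg (· - _) (integral_add hM_int hconj_int))
  rw [hsplit]
  rcases lt_trichotomy k 0 with hk | rfl | hk
  · obtain ⟨n, rfl⟩ := Int.exists_eq_neg_ofNat hk.le
    rw [hneg hk, neg_neg, hpos, Pi.single_eq_of_ne hk.ne, fourierStieltjes_neg]
    simp
  · have h0 := hpos 0
    rw [Nat.cast_zero] at h0
    simp [h0, fourierStieltjes_zero]
  · lift k to ℕ using hk.le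
    rw [hneg (neg_lt_zero.2 hk), hpos, Pi.single_eq_of_ne hk.ne']
    simp

/-- The measure with density `poissonIntegral m r` with respect to normalized Haar measure. -/
noncomputable def poissonMeasure (m : Measure (AddCircle T)) (r : ℝ) : Measure (AddCircle T) :=
  haarAddCircle.withDensity fun w => ENNReal.ofReal (poissonIntegral m r w)

lemma integral_poissonMeasure {E : Type*} [NormedAddCommGroup E] [NormedSpace ℝ E]
    [IsProbabilityMeasure m] (hr : |r| < 1) (g : AddCircle T → E) :
    ∫ w, g w ∂poissonMeasure m r = ∫ w, poissonIntegral m r w • g w ∂haarAddCircle := by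
  rw [poissonMeasure, integral_withDensity_eq_integral_toReal_smul (by fun_prop) (by simp)]
  simp only [ENNReal.toReal_ofReal (poissonIntegral_nonneg hr _)]

lemma fourierStieltjes_poissonMeasure [IsProbabilityMeasure m] (hr : |r| < 1) (k : ℤ) :
    fourierStieltjes (poissonMeasure m r) k = r ^ k.natAbs * fourierStieltjes m k := by
  rw [fourierStieltjes, integral_poissonMeasure hr, ← fourierCoeff_poissonIntegral hr]
  simp only [fourierCoeff, Complex.real_smul, smul_eq_mul, mul_comm]

lemma isProbabilityMeasure_poissonMeasure [IsProbabilityMeasure m] (hr : |r| < 1) :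
    IsProbabilityMeasure (poissonMeasure m r) := by
  have hint : ∫ w, poissonIntegral m r w ∂haarAddCircle = 1 := by
    have h := fourierCoeff_poissonIntegral (m := m) hr 0
    simp only [fourierCoeff, neg_zero, fourier_zero, one_smul, integral_complex_ofReal,
      Int.natAbs_zero, pow_zero, fourierStieltjes_zero, mul_one] at h
    exact_mod_cast h
  constructor
  rw [poissonMeasure, withDensity_apply _ .univ, setLIntegral_univ,
    ← ofReal_integral_eq_lintegral_ofReal (integrable_continuousMap _ _)
      (ae_of_all _ (poissonIntegral_nonneg hr)), hint, ENNReal.ofReal_one]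

lemma tendsto_integral_poissonMeasure [IsProbabilityMeasure m] {ι : Type*} {l : Filter ι}
    {r : ι → ℝ} (hr : ∀ i, |r i| < 1) (hr1 : Tendsto r l (𝓝 1)) (g : C(AddCircle T, ℂ)) :
    Tendsto (fun i => ∫ w, g w ∂poissonMeasure m (r i)) l (𝓝 (∫ w, g w ∂m)) := by
  have (i : ι) := isProbabilityMeasure_poissonMeasure (m := m) (hr i)
  refine tendsto_integral_of_forall_fourier (fun k => ?_) g
  have hfourier (ν : Measure (AddCircle T)) : ∫ w, fourier k w ∂ν = fourierStieltjes ν (-k) := by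
    rw [fourierStieltjes, neg_neg]
  simp only [hfourier, fourierStieltjes_poissonMeasure (hr _)]
  simpa using (((Complex.continuous_ofReal.tendsto 1).comp hr1).pow (-k).natAbs).mul_const
    (fourierStieltjes m (-k))

end PoissonMeasure

section SquareSum

open AddCircle
open scoped Topology

variable {T : ℝ} [hT : Fact (0 < T)] {m : Measure (AddCircle T)} {r : ℝ} {a α : ℕ → ℂ}

lemma two_mul_re_sub_norm_sq_le_of_mul_eq_one {M A : ℂ} (hM : 1 / 2 ≤ M.re) (h : M * A = 1)
    {t : ℝ} (ht : t ∈ Set.Icc (0 : ℝ) 1) :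
    2 * A.re - ‖A‖ ^ 2 ≤ t + 4 * ((2 * M.re - 1) * (1 - t)) := by
  have hnorm : ‖A‖ ^ 2 = A.re * A.re + A.im * A.im := by
    rw [← Complex.normSq_eq_norm_sq, Complex.normSq_apply]
  have hle_one : 2 * A.re - ‖A‖ ^ 2 ≤ 1 := by nlinarith [sq_nonneg (1 - A.re), sq_nonneg A.im]
  have hre : A.re = ‖A‖ ^ 2 * M.re := by
    have h1 := congrArg Complex.re h
    have h2 := congrArg Complex.im h
    rw [Complex.mul_re, Complex.one_re] at h1
    rw [Complex.mul_im, Complex.one_im] at h2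
    rw [hnorm]
    linear_combination -A.re * h1 - A.im * h2
  have hA : ‖A‖ ^ 2 ≤ 4 := by
    have hprod : ‖M‖ * ‖A‖ = 1 := by rw [← norm_mul, h, norm_one]
    have hM' : 1 / 2 ≤ ‖M‖ := hM.trans (Complex.re_le_norm M)
    have : ‖A‖ ≤ 2 := by nlinarith [norm_nonneg A]
    nlinarith [norm_nonneg A]
  have hle_four : 2 * A.re - ‖A‖ ^ 2 ≤ 4 * (2 * M.re - 1) := by
    calc 2 * A.re - ‖A‖ ^ 2 = ‖A‖ ^ 2 * (2 * M.re - 1) := by linear_combination 2 * hre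
      _ ≤ 4 * (2 * M.re - 1) := mul_le_mul_of_nonneg_right hA (by linarith)
  calc 2 * A.re - ‖A‖ ^ 2
      = t * (2 * A.re - ‖A‖ ^ 2) + (1 - t) * (2 * A.re - ‖A‖ ^ 2) := by ring
    _ ≤ t * 1 + (1 - t) * (4 * (2 * M.re - 1)) :=
      add_le_add (mul_le_mul_of_nonneg_left hle_one ht.1)
        (mul_le_mul_of_nonneg_left hle_four (sub_nonneg.2 ht.2))
    _ = t + 4 * ((2 * M.re - 1) * (1 - t)) := by ring

lemma abelSum_mul_abelSum_eq_one {C D : ℝ} (ha : ∀ n, ‖a n‖ ≤ C) (hα : ∀ n, ‖α n‖ ≤ D)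
    (h : PowerSeries.mk a * PowerSeries.mk α = 1) (hr : |r| < 1) (w : AddCircle T) :
    abelSum T a r w * abelSum T α r w = 1 := by
  have hmul : PowerSeries.mk (fun n => (r : ℂ) ^ n * a n) *
      PowerSeries.mk (fun n => (r : ℂ) ^ n * α n) = 1 := by
    rw [← PowerSeries.rescale_mk, ← PowerSeries.rescale_mk, ← map_mul, h, map_one]
  have hx := norm_ofReal_lt_one hr
  exact DFunLike.congr_fun (analyticFourierSum_mul_eq_one (T := T)
    (summable_pow_mul_of_norm_le ha hx) (summable_pow_mul_of_norm_le hα hx) hmul) w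

lemma integral_norm_sq_abelSum_le (hα : Summable fun n => ‖α n‖ ^ 2) {D : ℝ}
    (hD : ∀ n, ‖α n‖ ≤ D) (hr : |r| < 1) :
    ∫ w, ‖abelSum T α r w‖ ^ 2 ∂haarAddCircle ≤ ∑' n, ‖α n‖ ^ 2 := by
  have hle (n : ℕ) : ‖(r : ℂ) ^ n * α n‖ ^ 2 ≤ ‖α n‖ ^ 2 := by
    gcongr
    rw [norm_mul, norm_pow]
    exact mul_le_of_le_one_left (norm_nonneg _)
      (pow_le_one₀ (norm_nonneg _) (norm_ofReal_lt_one hr).le)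
  rw [abelSum, integral_norm_sq_analyticFourierSum
    (summable_pow_mul_of_norm_le hD (norm_ofReal_lt_one hr))]
  exact (hα.of_nonneg_of_le (fun _ => by positivity) hle).tsum_le_tsum hle hα

lemma integral_re_abelSum {D : ℝ} (hD : ∀ n, ‖α n‖ ≤ D) (hr : |r| < 1) :
    ∫ w, (abelSum T α r w).re ∂haarAddCircle = (α 0).re := by
  have h := fourierCoeff_abelSum_natCast (T := T) hD hr 0
  simp only [fourierCoeff, Nat.cast_zero, neg_zero, fourier_zero, one_smul, pow_zero,
    one_mul] at h
  rw [← h]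
  exact integral_re (integrable_continuousMap haarAddCircle (abelSum T α r))

lemma two_sub_tsum_norm_sq_le [IsProbabilityMeasure m]
    (h : PowerSeries.mk (fun n : ℕ => fourierStieltjes m n) * PowerSeries.mk α = 1)
    (hα : Summable fun n => ‖α n‖ ^ 2) (hr : |r| < 1) {φ : C(AddCircle T, ℝ)}
    (hφ : ∀ w, φ w ∈ Set.Icc (0 : ℝ) 1) :
    2 - ∑' n, ‖α n‖ ^ 2 ≤
      ∫ w, φ w ∂haarAddCircle + 4 * ∫ w, (1 - φ w) ∂poissonMeasure m r := by
  set M := abelSum T (fun n => fourierStieltjes m n) r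
  set A := abelSum T α r
  have hbound (n : ℕ) : ‖α n‖ ≤ √(∑' n, ‖α n‖ ^ 2) :=
    Real.le_sqrt_of_sq_le (hα.le_tsum n fun _ _ => by positivity)
  have hα0 : α 0 = 1 := by
    simpa [fourierStieltjes_zero] using congrArg (PowerSeries.coeff 0) h
  have hpt (w : AddCircle T) :
      2 * (A w).re - ‖A w‖ ^ 2 ≤ φ w + 4 * (poissonIntegral m r w * (1 - φ w)) :=
    two_mul_re_sub_norm_sq_le_of_mul_eq_one (one_half_le_re_abelSum_fourierStieltjes hr w)
      (abelSum_mul_abelSum_eq_one (fun n => norm_fourierStieltjes_le m n) hbound h hr w) (hφ w)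
  have hre : Integrable (fun w => 2 * (A w).re) haarAddCircle :=
    integrable_continuousMap _ ⟨fun w => 2 * (A w).re, by fun_prop⟩
  have hsq : Integrable (fun w => ‖A w‖ ^ 2) haarAddCircle :=
    integrable_continuousMap _ ⟨fun w => ‖A w‖ ^ 2, by fun_prop⟩
  have hP : Integrable (fun w => 4 * (poissonIntegral m r w * (1 - φ w))) haarAddCircle :=
    integrable_continuousMap _ ⟨fun w => 4 * (poissonIntegral m r w * (1 - φ w)), by fun_prop⟩
  have hφint : Integrable φ haarAddCircle := integrable_continuousMap _ φ
  calc 2 - ∑' n, ‖α n‖ ^ 2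
      ≤ ∫ w, 2 * (A w).re ∂haarAddCircle - ∫ w, ‖A w‖ ^ 2 ∂haarAddCircle := by
        rw [integral_const_mul, integral_re_abelSum hbound hr, hα0, Complex.one_re, mul_one]
        exact sub_le_sub_left (integral_norm_sq_abelSum_le hα hbound hr) 2
    _ = ∫ w, 2 * (A w).re - ‖A w‖ ^ 2 ∂haarAddCircle := (integral_sub hre hsq).symm
    _ ≤ ∫ w, φ w + 4 * (poissonIntegral m r w * (1 - φ w)) ∂haarAddCircle :=
        integral_mono (hre.sub hsq) (hφint.add hP) hpt
    _ = ∫ w, φ w ∂haarAddCircle + 4 * ∫ w, (1 - φ w) ∂poissonMeasure m r := by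
        rw [integral_add hφint hP, integral_const_mul, integral_poissonMeasure hr]
        simp only [smul_eq_mul]

theorem two_le_tsum_norm_sq [IsProbabilityMeasure m] (hm : m ⟂ₘ haarAddCircle)
    (h : PowerSeries.mk (fun n : ℕ => fourierStieltjes m n) * PowerSeries.mk α = 1)
    (hα : Summable fun n => ‖α n‖ ^ 2) : 2 ≤ ∑' n, ‖α n‖ ^ 2 := by
  refine le_of_forall_pos_le_add fun ε hε => ?_
  obtain ⟨φ, hφ, hφhaar, hφm⟩ :=
    exists_continuousMap_integral_le_of_mutuallySingular hm (by positivity : 0 < ε / 5)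
  obtain ⟨r, -, hr, hr1⟩ := exists_seq_strictMono_tendsto' (zero_lt_one' ℝ)
  have hr' (n : ℕ) : |r n| < 1 := abs_lt.2 ⟨by linarith [(hr n).1], (hr n).2⟩
  have hlim : Tendsto (fun n => ∫ w, (1 - φ w) ∂poissonMeasure m (r n)) atTop
      (𝓝 (∫ w, (1 - φ w) ∂m)) := by
    have hlim_ofReal := tendsto_integral_poissonMeasure (m := m) hr' hr1
      ⟨fun w => ((1 - φ w : ℝ) : ℂ), by fun_prop⟩
    simp only [ContinuousMap.coe_mk, integral_complex_ofReal] at hlim_ofReal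
    exact (Complex.continuous_re.tendsto _).comp hlim_ofReal
  have hle := ge_of_tendsto' ((hlim.const_mul 4).const_add _) fun n =>
    two_sub_tsum_norm_sq_le h hα (hr' n) hφ
  linarith

end SquareSum

section CircleMultiplication

variable {X E : Type*} [TopologicalSpace X] [MeasurableSpace X] [OpensMeasurableSpace X]
  [NormedAddCommGroup E] [NormedSpace ℂ E] {p : ENNReal}

lemma memLp_circle_smul {μ : Measure X} (c : C(X, Circle)) (f : Lp E p μ) :
    MemLp (fun x => c x • f x) p μ := by
  refine (Lp.memLp f).of_le ?_ (ae_of_all _ fun x => (Circle.norm_smul _ _).le)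
  have hc : Continuous fun x => (c x : ℂ) := by fun_prop
  exact hc.aestronglyMeasurable.smul (Lp.aestronglyMeasurable f)

variable [Fact (1 ≤ p)]

/-- Multiplication by a unimodular continuous function, as a linear isometry of `Lᵖ`. -/
noncomputable def circleMulₗᵢ (μ : Measure X) (c : C(X, Circle)) : Lp E p μ →ₗᵢ[ℂ] Lp E p μ where
  toFun f := (memLp_circle_smul c f).toLp
  map_add' f g := by
    rw [← MemLp.toLp_add]
    refine MemLp.toLp_congr _ _ ?_
    filter_upwards [Lp.coeFn_add f g] with x hx
    rw [hx, Pi.add_apply, smul_add, Pi.add_apply]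
  map_smul' z f := by
    rw [RingHom.id_apply, ← MemLp.toLp_const_smul]
    refine MemLp.toLp_congr _ _ ?_
    filter_upwards [Lp.coeFn_smul z f] with x hx
    rw [hx, Pi.smul_apply, smul_comm, Pi.smul_apply]
  norm_map' f := by
    refine (Lp.norm_toLp _ (memLp_circle_smul c f)).trans ?_
    rw [Lp.norm_def, eLpNorm_congr_norm_ae (ae_of_all _ fun x => Circle.norm_smul (c x) (f x))]

lemma coeFn_circleMulₗᵢ (μ : Measure X) (c : C(X, Circle)) (f : Lp E p μ) :
    circleMulₗᵢ μ c f =ᵐ[μ] fun x => c x • f x :=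
  MemLp.coeFn_toLp (memLp_circle_smul c f)

lemma circleMulₗᵢ_mul_apply (μ : Measure X) (c d : C(X, Circle)) (f : Lp E p μ) :
    circleMulₗᵢ μ (c * d) f = circleMulₗᵢ μ c (circleMulₗᵢ μ d f) := by
  refine Lp.ext ?_
  filter_upwards [coeFn_circleMulₗᵢ μ (c * d) f, coeFn_circleMulₗᵢ μ c (circleMulₗᵢ μ d f),
    coeFn_circleMulₗᵢ μ d f] with x h₁ h₂ h₃
  rw [h₁, h₂, h₃, ContinuousMap.mul_apply, mul_smul]

lemma circleMulₗᵢ_one_apply (μ : Measure X) (f : Lp E p μ) : circleMulₗᵢ μ 1 f = f := by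
  refine Lp.ext ?_
  filter_upwards [coeFn_circleMulₗᵢ μ 1 f] with x hx
  rw [hx, ContinuousMap.one_apply, one_smul]

/-- The isometric representation of the group `C(X, Circle)` on `Lᵖ` by multiplication. -/
noncomputable def circleMul (E : Type*) [NormedAddCommGroup E] [NormedSpace ℂ E] (p : ENNReal)
    [Fact (1 ≤ p)] (μ : Measure X) : C(X, Circle) →* (Lp E p μ ≃ₗᵢ[ℂ] Lp E p μ) where
  toFun c :=
    { circleMulₗᵢ μ c with
      invFun := circleMulₗᵢ μ c⁻¹
      left_inv := fun f => by
        change circleMulₗᵢ μ c⁻¹ (circleMulₗᵢ μ c f) = f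
        rw [← circleMulₗᵢ_mul_apply, inv_mul_cancel, circleMulₗᵢ_one_apply]
      right_inv := fun f => by
        change circleMulₗᵢ μ c (circleMulₗᵢ μ c⁻¹ f) = f
        rw [← circleMulₗᵢ_mul_apply, mul_inv_cancel, circleMulₗᵢ_one_apply] }
  map_one' := LinearIsometryEquiv.ext (circleMulₗᵢ_one_apply μ)
  map_mul' c d := LinearIsometryEquiv.ext (circleMulₗᵢ_mul_apply μ c d)

lemma coeFn_circleMul (μ : Measure X) (c : C(X, Circle)) (f : Lp E p μ) :
    circleMul E p μ c f =ᵐ[μ] fun x => c x • f x :=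
  coeFn_circleMulₗᵢ μ c f

end CircleMultiplication

section Exponentials

variable {μ : Measure ℝ} [IsFiniteMeasure μ]

/-- The character `x ↦ exp (2πi y x)` of the real line, as a function of `x`. -/
noncomputable def realChar (y : ℝ) : C(ℝ, Circle) :=
  ⟨fun x => Real.fourierChar (y * x), by fun_prop⟩

lemma realChar_add (y t : ℝ) : realChar (y + t) = realChar y * realChar t := by
  ext x
  simp only [realChar, ContinuousMap.coe_mk, ContinuousMap.mul_apply, add_mul,
    AddChar.map_add_eq_mul]

lemma realChar_zpow (y : ℝ) (n : ℤ) : realChar y ^ n = realChar (n * y) := by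
  ext x
  rw [ContinuousMap.zpow_apply, realChar, realChar, ContinuousMap.coe_mk, ContinuousMap.coe_mk,
    ← AddChar.map_zsmul_eq_zpow, zsmul_eq_mul, mul_assoc]

/-- The exponential `x ↦ exp (2πi y x)` as a vector of `L²(μ)`. -/
noncomputable def expVec (μ : Measure ℝ) [IsFiniteMeasure μ] (y : ℝ) : Lp ℂ 2 μ :=
  circleMul ℂ 2 μ (realChar y) (Lp.const 2 μ 1)

lemma coeFn_expVec (μ : Measure ℝ) [IsFiniteMeasure μ] (y : ℝ) :
    expVec μ y =ᵐ[μ] fun x => Complex.exp (2 * Real.pi * Complex.I * y * x) := by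
  filter_upwards [coeFn_circleMul μ (realChar y) (Lp.const 2 μ (1 : ℂ)),
    Lp.coeFn_const 2 μ (1 : ℂ)] with x h₁ h₂
  rw [expVec, h₁, h₂, Function.const_apply, Circle.smul_def, smul_eq_mul, mul_one, realChar,
    ContinuousMap.coe_mk, Real.fourierChar_apply]
  push_cast
  ring_nf

lemma circleMul_realChar_zpow_expVec (n : ℤ) (y : ℝ) :
    (circleMul ℂ 2 μ (realChar 1) ^ n) (expVec μ y) = expVec μ (n + y) := by
  rw [← map_zpow, expVec, ← Function.comp_apply (f := circleMul ℂ 2 μ _),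
    ← LinearIsometryEquiv.coe_mul, ← map_mul, realChar_zpow, mul_one, ← realChar_add, expVec]

lemma norm_expVec [IsProbabilityMeasure μ] (y : ℝ) : ‖expVec μ y‖ = 1 := by
  rw [expVec, LinearIsometryEquiv.norm_map, Lp.norm_const _ _ _ two_ne_zero, probReal_univ,
    Real.one_rpow, norm_one, mul_one]

lemma conj_exp_two_pi_I_mul (y x : ℝ) :
    (starRingEnd ℂ) (Complex.exp (2 * Real.pi * Complex.I * y * x)) =
      Complex.exp (-(2 * Real.pi * Complex.I * y * x)) := by
  rw [← Complex.exp_conj]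
  simp only [map_mul, Complex.conj_ofReal, Complex.conj_I, Complex.conj_ofNat]
  ring_nf

lemma inner_expVec (y : ℝ) (f : Lp ℂ 2 μ) :
    inner ℂ (expVec μ y) f =
      ∫ x, f x * Complex.exp (-(2 * Real.pi * Complex.I * y * x)) ∂μ := by
  rw [L2.inner_def]
  refine integral_congr_ae ?_
  filter_upwards [coeFn_expVec μ y] with x hx
  rw [hx, RCLike.inner_apply, conj_exp_two_pi_I_mul]

lemma inner_expVec_expVec (y t : ℝ) :
    inner ℂ (expVec μ y) (expVec μ t) =
      ∫ x, Complex.exp (-(2 * Real.pi * Complex.I * (y - t : ℝ) * x)) ∂μ := by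
  rw [inner_expVec]
  refine integral_congr_ae ?_
  filter_upwards [coeFn_expVec μ t] with x hx
  rw [hx, ← Complex.exp_add]
  push_cast
  ring_nf

end Exponentials

section PeriodicSection

open AddCircle

variable {T : ℝ} [hT : Fact (0 < T)]

/-- The section of `ℝ → AddCircle T` with values in `[a, a + T)`. -/
noncomputable def circleSection (a : ℝ) (t : AddCircle T) : ℝ := measurableEquivIco T a t

lemma measurable_circleSection (a : ℝ) : Measurable (circleSection (T := T) a) :=
  measurable_subtype_coe.comp (measurableEquivIco T a).measurable

lemma circleSection_coe {a x : ℝ} (hx : x ∈ Set.Ico a (a + T)) :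
    circleSection a (x : AddCircle T) = x :=
  congrArg Subtype.val (equivIco_coe_eq hx)

variable {μ : Measure ℝ} {a : ℝ}

lemma circleSection_comp_coe_ae_eq (h : ∀ᵐ x ∂μ, x ∈ Set.Ico a (a + T)) :
    circleSection (T := T) a ∘ (↑) =ᵐ[μ] id :=
  h.mono fun _ => circleSection_coe

lemma measurePreserving_circleSection (h : ∀ᵐ x ∂μ, x ∈ Set.Ico a (a + T)) :
    MeasurePreserving (circleSection (T := T) a) (μ.map (↑)) μ := by
  refine ⟨measurable_circleSection a, ?_⟩
  rw [Measure.map_map (measurable_circleSection a) AddCircle.measurable_mk',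
    Measure.map_congr (circleSection_comp_coe_ae_eq h), Measure.map_id]

lemma mutuallySingular_of_map {X Y : Type*} [MeasurableSpace X] [MeasurableSpace Y]
    {m ν : Measure X} {f : X → Y} (hf : Measurable f) (h : m.map f ⟂ₘ ν.map f) : m ⟂ₘ ν := by
  obtain ⟨s, hs, hm, hν⟩ := h
  exact ⟨f ⁻¹' s, hf hs, (Measure.map_apply hf hs).symm.trans hm,
    (Measure.map_apply hf hs.compl).symm.trans hν⟩

lemma map_coe_mutuallySingular_haarAddCircle (h : ∀ᵐ x ∂μ, x ∈ Set.Ico a (a + T))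
    (hμ : μ ⟂ₘ volume) : μ.map ((↑) : ℝ → AddCircle T) ⟂ₘ haarAddCircle := by
  have hvol : (volume : Measure (AddCircle T)).map (circleSection a) ≪ volume := by
    rw [← (AddCircle.measurePreserving_mk T a).map_eq, ← Measure.restrict_congr_set Ico_ae_eq_Ioc,
      (measurePreserving_circleSection (ae_restrict_mem measurableSet_Ico)).map_eq]
    exact Measure.restrict_le_self.absolutelyContinuous
  have hhaar : haarAddCircle ≪ (volume : Measure (AddCircle T)) := by
    rw [volume_eq_smul_haarAddCircle]
    exact Measure.absolutelyContinuous_smul (ENNReal.ofReal_pos.2 hT.out).ne'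
  refine (mutuallySingular_of_map (measurable_circleSection a) ?_).mono_ac .rfl hhaar
  rw [(measurePreserving_circleSection h).map_eq]
  exact hμ.mono_ac .rfl hvol

lemma compMeasurePreserving_surjective {X Y E : Type*} [MeasurableSpace X] [MeasurableSpace Y]
    [NormedAddCommGroup E] {p : ENNReal} {μ : Measure X} {ν : Measure Y} {f : X → Y} {g : Y → X}
    (hf : MeasurePreserving f μ ν) (hg : MeasurePreserving g ν μ) (h : g ∘ f =ᵐ[μ] id) :
    Function.Surjective (Lp.compMeasurePreserving (E := E) (p := p) f hf) := by
  refine fun u => ⟨Lp.compMeasurePreserving g hg u, Lp.ext ?_⟩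
  filter_upwards [Lp.coeFn_compMeasurePreserving (Lp.compMeasurePreserving g hg u) hf,
    hf.quasiMeasurePreserving.ae_eq_comp (Lp.coeFn_compMeasurePreserving u hg), h] with x h₁ h₂ h₃
  rw [h₁, h₂]
  simpa using congrArg u h₃

lemma dense_span_toLp_fourier (m : Measure (AddCircle T)) [IsFiniteMeasure m] :
    Dense (Submodule.span ℂ
      (Set.range fun n : ℤ => ContinuousMap.toLp 2 m ℂ (fourier (T := T) n)) : Set (Lp ℂ 2 m)) := by
  have h := (ContinuousMap.toLp_denseRange (p := 2) ℂ m ℂ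
    ENNReal.ofNat_ne_top).topologicalClosure_map_submodule (span_fourier_closure_eq_top (T := T))
  rw [Submodule.map_span, ← Set.range_comp] at h
  exact Submodule.dense_iff_topologicalClosure_eq_top.2 h

end PeriodicSection

section ExponentialSystem

variable {μ : Measure ℝ} [IsFiniteMeasure μ]

lemma fourierStieltjes_map_coe (μ : Measure ℝ) (n : ℤ) :
    fourierStieltjes (μ.map ((↑) : ℝ → UnitAddCircle)) n =
      ∫ x, Complex.exp (-(2 * Real.pi * Complex.I * n * x)) ∂μ := by
  rw [fourierStieltjes, integral_map AddCircle.measurable_mk'.aemeasurable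
    (map_continuous (fourier (-n))).aestronglyMeasurable]
  refine integral_congr_ae (ae_of_all _ fun x => ?_)
  simp only [fourier_coe_apply]
  push_cast
  ring_nf

lemma compMeasurePreserving_toLp_fourier {m : Measure UnitAddCircle} [IsFiniteMeasure m]
    (hm : MeasurePreserving ((↑) : ℝ → UnitAddCircle) μ m) (n : ℤ) :
    Lp.compMeasurePreserving (↑) hm (ContinuousMap.toLp 2 m ℂ (fourier n)) = expVec μ n := by
  refine Lp.ext ?_
  filter_upwards [Lp.coeFn_compMeasurePreserving (ContinuousMap.toLp 2 m ℂ (fourier n)) hm,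
    hm.quasiMeasurePreserving.ae_eq_comp
      (ContinuousMap.coeFn_toLp (p := 2) (𝕜 := ℂ) m (fourier n)),
    coeFn_expVec μ n] with x h₁ h₂ h₃
  rw [h₁, h₂, h₃, Function.comp_apply, fourier_coe_apply]
  push_cast
  ring_nf

lemma dense_span_expVec (h : ∀ᵐ x ∂μ, x ∈ Set.Ico (0 : ℝ) 1) :
    Dense (Submodule.span ℂ (Set.range fun n : ℤ => expVec μ n) : Set (Lp ℂ 2 μ)) := by
  set m : Measure UnitAddCircle := μ.map (↑)
  have hm : MeasurePreserving ((↑) : ℝ → UnitAddCircle) μ m :=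
    AddCircle.measurable_mk'.measurePreserving μ
  have h' : ∀ᵐ x ∂μ, x ∈ Set.Ico (0 : ℝ) (0 + 1) := by rwa [zero_add]
  have hsurj : Function.Surjective (Lp.compMeasurePreservingₗᵢ (E := ℂ) (p := 2) ℂ _ hm) :=
    compMeasurePreserving_surjective hm (measurePreserving_circleSection h')
      (circleSection_comp_coe_ae_eq h')
  have hexp (n : ℤ) : Lp.compMeasurePreservingₗᵢ ℂ _ hm
      (ContinuousMap.toLp 2 m ℂ (fourier n)) = expVec μ n :=
    compMeasurePreserving_toLp_fourier hm n
  simp only [← hexp]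
  rw [Set.range_comp' (Lp.compMeasurePreservingₗᵢ ℂ _ hm), ← LinearIsometry.coe_toLinearMap,
    ← Submodule.map_span]
  exact hsurj.denseRange.dense_image (LinearIsometry.continuous _) (dense_span_toLp_fourier m)

end ExponentialSystem

section Sampling

open scoped Topology InnerProductSpace

variable {μ : Measure ℝ} [IsProbabilityMeasure μ] {α : ℕ → ℂ}

theorem tendsto_sum_smul_expVec (hsupp : ∀ᵐ x ∂μ, x ∈ Set.Ico (0 : ℝ) 1) (hsing : μ ⟂ₘ volume)
    (hα : PowerSeries.mk (fun n : ℕ => ⟪expVec μ n, expVec μ 0⟫_ℂ) * PowerSeries.mk α = 1)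
    (f : Lp ℂ 2 μ) :
    Tendsto (fun N => ∑ n ∈ Finset.range N,
      (∑ j ∈ Finset.range (n + 1), α (n - j) * ⟪expVec μ j, f⟫_ℂ) • expVec μ n) atTop (𝓝 f) := by
  set U := circleMul ℂ 2 μ (realChar 1)
  set m : Measure UnitAddCircle := μ.map (↑)
  have hzpow (n : ℤ) : (U ^ n) (expVec μ 0) = expVec μ n := by
    rw [circleMul_realChar_zpow_expVec, add_zero]
  have hpow (n : ℕ) : (U ^ n) (expVec μ 0) = expVec μ n := mod_cast hzpow n
  have hm : IsProbabilityMeasure m :=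
    Measure.isProbabilityMeasure_map AddCircle.measurable_mk'.aemeasurable
  have hm_sing : m ⟂ₘ AddCircle.haarAddCircle :=
    map_coe_mutuallySingular_haarAddCircle (a := 0) (by rwa [zero_add]) hsing
  have hcoeff (n : ℕ) : fourierStieltjes m n = ⟪expVec μ n, expVec μ 0⟫_ℂ := by
    rw [fourierStieltjes_map_coe, inner_expVec_expVec, sub_zero]
    rfl
  have hα_pow : PowerSeries.mk (fun n : ℕ => ⟪(U ^ n) (expVec μ 0), expVec μ 0⟫_ℂ) *
      PowerSeries.mk α = 1 := by simpa only [hpow] using hα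
  have hα_sq : 2 ≤ ∑' n, ‖α n‖ ^ 2 :=
    two_le_tsum_norm_sq hm_sing (by simpa only [hcoeff] using hα)
      (summable_norm_sq_of_mk_inner_mul_eq_one (norm_expVec 0) hα_pow)
  simpa only [hpow] using tendsto_kaczmarz_sum (norm_expVec 0)
    (by simpa only [hzpow] using dense_span_expVec hsupp) hα_pow hα_sq f

-- The coercion `List ℕ → List ℝ` is the monadic lift. It arises from `p.blocks.map fun q => μhat q`
-- because `q` is elaborated there as a real number.
lemma map_coe_list (g : ℝ → ℂ) (l : List ℕ) :
    ((l : List ℝ).map fun x => g x) = l.map fun n : ℕ => g n := by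
  simp [← List.map_eq_flatMap]

end Sampling

/-- Let `μ` be a singular Borel probability measure on `[0,1)` with
Fourier–Stieltjes transform `μ̂` and composition-sum coefficients `α_n`.  If
`F : ℝ → ℂ` has the form `F(y) = ∫₀¹ f(x) exp(-2πiyx) dμ(x)` for some `f ∈ L²(μ)`, then
`F(y) = Σ_{n=0}^∞ (Σ_{j=0}^n α_{n-j} F(j)) μ̂(y - n)`, the partial sums converging
uniformly in `y ∈ ℝ`. -/
theorem shannon_sampling_formula
    (μ : Measure ℝ) [IsProbabilityMeasure μ]
    (hsupp : μ (Set.Ico (0 : ℝ) 1)ᶜ = 0)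
    (hsing : μ.MutuallySingular MeasureTheory.volume)
    (μhat : ℝ → ℂ)
    (hμhat : ∀ x : ℝ, μhat x = ∫ y, Complex.exp (-(2 * Real.pi * Complex.I * x * y)) ∂μ)
    (α : ℕ → ℂ)
    (hα0 : α 0 = 1)
    (hα : ∀ n : ℕ, 0 < n → α n = ∑ p : Composition n,
      (-1 : ℂ) ^ p.length * (p.blocks.map fun q => μhat (q : ℝ)).prod)
    (f : Lp ℂ 2 μ) (F : ℝ → ℂ)
    (hF : ∀ y : ℝ, F y =
      ∫ x, (f : ℝ → ℂ) x * Complex.exp (-(2 * Real.pi * Complex.I * y * x)) ∂μ) :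
    TendstoUniformly
      (fun N : ℕ => fun y : ℝ => ∑ n ∈ Finset.range N,
        (∑ j ∈ Finset.range (n + 1), α (n - j) * F (j : ℝ)) * μhat (y - n))
      F atTop := by
  have hinner (y t : ℝ) : inner ℂ (expVec μ y) (expVec μ t) = μhat (y - t) := by
    rw [inner_expVec_expVec, hμhat]
  have hμhat0 : μhat (0 : ℕ) = 1 := by simp [hμhat]
  have hα_eq : α = compositionSum (-fun n : ℕ => μhat n) := by
    ext n
    rcases n.eq_zero_or_pos with rfl | hn
    · rw [hα0, compositionSum_zero]
    · rw [hα n hn, compositionSum_neg]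
      simp only [map_coe_list]
  have hα_inv : PowerSeries.mk (fun n : ℕ => inner ℂ (expVec μ n) (expVec μ 0)) *
      PowerSeries.mk α = 1 := by
    simpa only [hinner, sub_zero, hα_eq] using mk_mul_mk_compositionSum_neg _ hμhat0
  have huniform := tendstoUniformly_inner (𝕜 := ℂ) (tendsto_sum_smul_expVec hsupp hsing hα_inv f)
    fun y => (norm_expVec (μ := μ) y).le
  simpa only [inner_sum, inner_smul_right, inner_expVec, ← hF, hinner] using huniform
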